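/- arXiv:2105.07306 — 7 statements merged into one kernel-verified Lean document; each statement's English description precedes it below -/
import Mathlib

section
/- Let G be a group acting by isometries on two proper metric spaces Y and X, and suppose the action of G on Y is cocompact, i.e. there exists a compact set K ⊆ Y such that the translates g • K (g ∈ G) cover Y. Let f : Y → X be a continuous G-equivariant map (f(g • a) = g • f(a) for all g ∈ G, a ∈ Y) such that the preimage under f of every compact subset of X is compact. Then for every r > 0 there exists R > 0 such that for all a, b ∈ Y, if dist(f(a), f(b)) ≤ r then dist(a, b) ≤ R. -/
/-!
By equivariance and invariance of both metrics, `a` may be translated into the compact set `K`.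
Then `f a` and `f b` both lie in the closed `r`-thickening of `f '' K`, which is compact because
`X` is proper, so `a` and `b` lie in its compact preimage, whose diameter bounds `dist a b`.
-/

open Pointwise

/-- If a group `G` acts by isometries on proper metric spaces `Y` and `X`, the action on `Y`
is cocompact, and `f : Y → X` is a continuous `G`-equivariant map such that preimages of
compact sets are compact, then points whose images are at distance `≤ r` are at uniformly
bounded distance. -/
theorem stmt0 {G Y X : Type*} [Group G] [MetricSpace Y] [MetricSpace X]
    [ProperSpace Y] [ProperSpace X] [MulAction G Y] [MulAction G X]
    (hisomY : ∀ (g : G) (a b : Y), dist (g • a) (g • b) = dist a b)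
    (hisomX : ∀ (g : G) (a b : X), dist (g • a) (g • b) = dist a b)
    (hcocompact : ∃ K : Set Y, IsCompact K ∧ ∀ y : Y, ∃ g : G, y ∈ g • K)
    (f : Y → X) (hf : Continuous f)
    (hequiv : ∀ (g : G) (a : Y), f (g • a) = g • f a)
    (hproper : ∀ s : Set X, IsCompact s → IsCompact (f ⁻¹' s)) :
    ∀ r : ℝ, 0 < r → ∃ R : ℝ, 0 < R ∧
      ∀ a b : Y, dist (f a) (f b) ≤ r → dist a b ≤ R := by
  intro r hr
  obtain ⟨K, hK, hcov⟩ := hcocompact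
  have hC : IsCompact (f ⁻¹' Metric.cthickening r (f '' K)) :=
    hproper _ (hK.image hf).cthickening
  -- The summand `1` makes the bound positive even when the diameter vanishes.
  refine ⟨Metric.diam (f ⁻¹' Metric.cthickening r (f '' K)) + 1,
    by linarith [Metric.diam_nonneg (s := f ⁻¹' Metric.cthickening r (f '' K))], ?_⟩
  intro a b hab
  obtain ⟨g, k, hk, rfl⟩ := hcov a
  obtain ⟨c, rfl⟩ : ∃ c : Y, b = g • c := ⟨g⁻¹ • b, (smul_inv_smul g b).symm⟩
  change dist (f (g • k)) (f (g • c)) ≤ r at hab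
  change dist (g • k) (g • c) ≤ _
  rw [hequiv, hequiv, hisomX] at hab
  rw [hisomY]
  have hk' : k ∈ f ⁻¹' Metric.cthickening r (f '' K) :=
    Metric.self_subset_cthickening _ (Set.mem_image_of_mem f hk)
  have hc' : c ∈ f ⁻¹' Metric.cthickening r (f '' K) :=
    Metric.mem_cthickening_of_dist_le (f c) (f k) r _ (Set.mem_image_of_mem f hk)
      (by rwa [dist_comm])
  linarith [Metric.dist_le_diam_of_mem hC.isBounded hk' hc']
end

section
/- Let X be a proper metric space that is unbounded and geodesic, meaning that for all a, b ∈ X there exists a map γ : ℝ → X with γ(0) = a, γ(dist(a,b)) = b, and dist(γ(s), γ(u)) = |s − u| for all s, u ∈ [0, dist(a,b)]. Then for every p ∈ X there exists a geodesic ray from p, i.e. a map σ : ℝ → X with σ(0) = p and dist(σ(s), σ(u)) = |s − u| for all s, u ≥ 0. -/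
/-!
Since `X` is unbounded there are points `b n` with `dist p (b n) > n`; take geodesic segments
`γ n` from `p` to `b n`. For fixed `t ≥ 0` the points `γ n t` lie, for all large `n`, in the
compact ball of radius `t` around `p`, so they converge along any free ultrafilter on `ℕ`.
The pointwise ultralimit of the segments is the required ray: distances pass to the limit by
continuity. Using an ultrafilter replaces the diagonal subsequence of the Arzelà–Ascoli argument.
-/

/-- In a proper, unbounded, geodesic metric space, every point is the starting point of a
geodesic ray. -/
theorem stmt1 {X : Type*} [MetricSpace X] [ProperSpace X]
    (hunbounded : ¬ Bornology.IsBounded (Set.univ : Set X))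
    (hgeodesic : ∀ a b : X, ∃ γ : ℝ → X, γ 0 = a ∧ γ (dist a b) = b ∧
      ∀ s ∈ Set.Icc (0 : ℝ) (dist a b), ∀ u ∈ Set.Icc (0 : ℝ) (dist a b),
        dist (γ s) (γ u) = |s - u|) :
    ∀ p : X, ∃ σ : ℝ → X, σ 0 = p ∧
      ∀ s u : ℝ, 0 ≤ s → 0 ≤ u → dist (σ s) (σ u) = |s - u| := by
  intro p
  have hfar : ∀ n : ℕ, ∃ b : X, (n : ℝ) < dist p b := by
    intro n
    by_contra! h
    refine hunbounded ((Metric.isBounded_closedBall (x := p) (r := n)).subset ?_)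
    intro x _
    rw [Metric.mem_closedBall, dist_comm]
    exact h x
  choose b hb using hfar
  choose γ hγ0 _ hγ using fun n => hgeodesic p (b n)
  let U : Ultrafilter ℕ := Ultrafilter.of Filter.atTop
  have hU : (U : Filter ℕ) ≤ Filter.atTop := Ultrafilter.of_le Filter.atTop
  have hlarge : ∀ t : ℝ, ∀ᶠ n in (U : Filter ℕ), t ≤ dist p (b n) := by
    intro t
    obtain ⟨N, hN⟩ := exists_nat_ge t
    refine hU ((Filter.eventually_ge_atTop N).mono fun n hn => ?_)
    have hNn : (N : ℝ) ≤ n := by exact_mod_cast hn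
    linarith [hb n]
  have hlim : ∀ t : ℝ, ∃ x : X, 0 ≤ t →
      Filter.Tendsto (fun n => γ n t) (U : Filter ℕ) (nhds x) := by
    intro t
    by_cases ht : 0 ≤ t
    · have hmem : ∀ᶠ n in (U : Filter ℕ), γ n t ∈ Metric.closedBall p t := by
        filter_upwards [hlarge t] with n hn
        have h := hγ n t ⟨ht, hn⟩ 0 ⟨le_rfl, dist_nonneg⟩
        rw [hγ0, sub_zero, abs_of_nonneg ht] at h
        exact h.le
      obtain ⟨x, _, hx⟩ := (isCompact_closedBall p t).ultrafilter_le_nhds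
        (U.map fun n => γ n t) (Filter.le_principal_iff.2 hmem)
      exact ⟨x, fun _ => hx⟩
    · exact ⟨p, fun h => absurd h ht⟩
  choose σ hσ using hlim
  refine ⟨σ, ?_, fun s u hs hu => ?_⟩
  · refine tendsto_nhds_unique (hσ 0 le_rfl) ?_
    simp only [hγ0]
    exact tendsto_const_nhds
  · refine tendsto_nhds_unique ((hσ s hs).dist (hσ u hu)) (tendsto_const_nhds.congr' ?_)
    filter_upwards [hlarge s, hlarge u] with n hsn hun
    exact (hγ n s ⟨hs, hsn⟩ u ⟨hu, hun⟩).symm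
end

section
/- Let X be a proper, noncompact, geodesic metric space, and let a group G act on X by isometries such that the action is cocompact, i.e. there exists a compact set K ⊆ X such that the translates g • K (g ∈ G) cover X. Then X contains a geodesic line: there exists γ : ℝ → X such that dist(γ(s), γ(u)) = |s − u| for all s, u ∈ ℝ. -/
open Pointwise

/-!
A proper noncompact space is unbounded, so it contains geodesic segments of length at least `2 * n`
for every `n`. Reparametrize such a segment to be isometric on `[-n, n]` and translate it by the
group so that its value at `0` lies in the compact set `K` (`exists_centered_segment`). For fixed
`t`, the values at `t` of these segments eventually lie in a fixed closed ball, which is compact, so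
they converge along any nonprincipal ultrafilter on `ℕ`; the pointwise ultralimit is the line.
-/

/-- Segments of arbitrary length, isometric on `[-n, n]`, whose midpoints lie in `K`. -/
lemma exists_centered_segment {G X : Type*} [Group G] [MetricSpace X] [ProperSpace X]
    (hnoncompact : ¬ CompactSpace X)
    (hgeodesic : ∀ a b : X, ∃ γ : ℝ → X, γ 0 = a ∧ γ (dist a b) = b ∧
      ∀ s ∈ Set.Icc (0 : ℝ) (dist a b), ∀ u ∈ Set.Icc (0 : ℝ) (dist a b),
        dist (γ s) (γ u) = |s - u|)
    [MulAction G X]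
    (hisom : ∀ (g : G) (a b : X), dist (g • a) (g • b) = dist a b)
    {K : Set X} (hK : ∀ x : X, ∃ g : G, x ∈ g • K) (p : X) (n : ℕ) :
    ∃ σ : ℝ → X, σ 0 ∈ K ∧ ∀ s ∈ Set.Icc (-(n : ℝ)) n, ∀ u ∈ Set.Icc (-(n : ℝ)) n,
      dist (σ s) (σ u) = |s - u| := by
  obtain ⟨q, hq⟩ : ∃ q : X, 2 * (n : ℝ) ≤ dist p q := by
    by_contra! h
    refine hnoncompact ⟨(isCompact_closedBall p (2 * (n : ℝ))).of_isClosed_subset isClosed_univ ?_⟩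
    intro q _
    rw [Metric.mem_closedBall, dist_comm]
    exact (h q).le
  obtain ⟨γ, -, -, hγ⟩ := hgeodesic p q
  obtain ⟨g, hg⟩ := hK (γ n)
  refine ⟨fun t => g⁻¹ • γ (t + n), ?_, fun s hs u hu => ?_⟩
  · simpa [Set.mem_smul_set_iff_inv_smul_mem] using hg
  · rw [hisom, hγ _ ⟨by linarith [hs.1], by linarith [hs.2]⟩ _
      ⟨by linarith [hu.1], by linarith [hu.2]⟩, add_sub_add_right_eq_sub]

/-- A proper, noncompact, geodesic metric space admitting a cocompact isometric group action
contains a geodesic line. -/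
theorem stmt2 {G X : Type*} [Group G] [MetricSpace X] [ProperSpace X]
    (hnoncompact : ¬ CompactSpace X)
    (hgeodesic : ∀ a b : X, ∃ γ : ℝ → X, γ 0 = a ∧ γ (dist a b) = b ∧
      ∀ s ∈ Set.Icc (0 : ℝ) (dist a b), ∀ u ∈ Set.Icc (0 : ℝ) (dist a b),
        dist (γ s) (γ u) = |s - u|)
    [MulAction G X]
    (hisom : ∀ (g : G) (a b : X), dist (g • a) (g • b) = dist a b)
    (hcocompact : ∃ K : Set X, IsCompact K ∧ ∀ x : X, ∃ g : G, x ∈ g • K) :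
    ∃ γ : ℝ → X, ∀ s u : ℝ, dist (γ s) (γ u) = |s - u| := by
  obtain ⟨K, hKc, hK⟩ := hcocompact
  have hne : Nonempty X := by
    by_contra h
    rw [not_nonempty_iff] at h
    exact hnoncompact inferInstance
  obtain ⟨p⟩ := hne
  choose σ hσK hσ using exists_centered_segment hnoncompact hgeodesic hisom hK p
  obtain ⟨R, hR⟩ := hKc.isBounded.subset_closedBall p
  have hev : ∀ t : ℝ, ∀ᶠ n : ℕ in (Filter.hyperfilter ℕ : Filter ℕ),
      t ∈ Set.Icc (-(n : ℝ)) n := by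
    intro t
    refine Filter.Eventually.filter_mono Nat.hyperfilter_le_atTop ?_
    filter_upwards [Filter.eventually_ge_atTop ⌈|t|⌉₊] with n hn
    exact abs_le.mp (Nat.ceil_le.mp hn)
  have hlim : ∀ t : ℝ, ∃ x : X,
      Filter.Tendsto (fun n => σ n t) (Filter.hyperfilter ℕ : Filter ℕ) (nhds x) := by
    intro t
    have hball : ∀ᶠ n : ℕ in (Filter.hyperfilter ℕ : Filter ℕ),
        σ n t ∈ Metric.closedBall p (|t| + R) := by
      filter_upwards [hev t, hev 0] with n hn h0
      have h1 := hσ n t hn 0 h0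
      have h2 : dist (σ n 0) p ≤ R := hR (hσK n)
      rw [sub_zero] at h1
      rw [Metric.mem_closedBall]
      linarith [dist_triangle (σ n t) (σ n 0) p]
    obtain ⟨x, -, hx⟩ := (isCompact_closedBall p (|t| + R)).ultrafilter_le_nhds
      ((Filter.hyperfilter ℕ).map fun n => σ n t) (Filter.le_principal_iff.mpr hball)
    exact ⟨x, hx⟩
  choose γ hγ using hlim
  refine ⟨γ, fun s u => tendsto_nhds_unique ((hγ s).dist (hγ u)) ?_⟩
  refine tendsto_const_nhds.congr' ?_
  filter_upwards [hev s, hev u] with n hs hu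
  exact (hσ n s hs u hu).symm
end

section
/- Let X be a metric space, p, x ∈ X, t = dist(p, x), and let η : ℝ → X be a unit-speed minimizing geodesic from p to x (η(0) = p, η(t) = x, and dist(η(s), η(u)) = |s − u| for all s, u ∈ [0, t]). Let L, ℓ be real numbers with 0 < ℓ < L. Suppose s ∈ X satisfies dist(s, x) = 4L + ℓ and dist(s, η(u)) ≤ L + ℓ for some u ∈ [0, t]. Then every z ∈ X with dist(p, z) ≥ t satisfies dist(s, z) ≥ 2L − ℓ; in particular dist(s, z) > L. -/
/-- If `η` is a unit-speed minimizing geodesic from `p` to `x` with `t = dist p x`,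
`0 < ℓ < L`, and `s` satisfies `dist s x = 4L + ℓ` and `dist s (η u) ≤ L + ℓ` for some
`u ∈ [0, t]`, then every `z` with `dist p z ≥ t` satisfies `dist s z ≥ 2L - ℓ`, in
particular `dist s z > L`. -/
theorem stmt3 {X : Type*} [MetricSpace X] (p x : X) (t : ℝ) (ht : t = dist p x)
    (η : ℝ → X) (hη0 : η 0 = p) (hηt : η t = x)
    (hηgeo : ∀ s ∈ Set.Icc (0 : ℝ) t, ∀ u ∈ Set.Icc (0 : ℝ) t,
      dist (η s) (η u) = |s - u|)
    (L ℓ : ℝ) (hℓ : 0 < ℓ) (hℓL : ℓ < L)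
    (s : X) (hsx : dist s x = 4 * L + ℓ)
    (hsη : ∃ u ∈ Set.Icc (0 : ℝ) t, dist s (η u) ≤ L + ℓ) :
    ∀ z : X, dist p z ≥ t → dist s z ≥ 2 * L - ℓ ∧ dist s z > L := by
  obtain ⟨u, hu, hsu⟩ := hsη
  intro z hz
  have h0 : (0 : ℝ) ∈ Set.Icc (0 : ℝ) t := ⟨le_rfl, hu.1.trans hu.2⟩
  have h1 : t ∈ Set.Icc (0 : ℝ) t := ⟨hu.1.trans hu.2, le_rfl⟩
  have hpu : dist p (η u) = u := by
    rw [← hη0, hηgeo 0 h0 u hu, zero_sub, abs_neg, abs_of_nonneg hu.1]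
  have hux : dist (η u) x = t - u := by
    rw [← hηt, hηgeo u hu t h1, abs_sub_comm, abs_of_nonneg (sub_nonneg.2 hu.2)]
  -- `s` is far from `x` but close to `η u`, so `η u` is at distance `t - u ≥ 3L` from `x`.
  have hsx_le := dist_triangle s (η u) x
  -- Reaching `z` from `p` through `η u` and `s` costs at least `t`, so
  -- `dist s z ≥ (t - u) - (L + ℓ) ≥ 2L - ℓ`.
  have hpz_le := dist_triangle4 p (η u) s z
  rw [dist_comm (η u) s] at hpz_le
  constructor <;> linarith
end

section
/- Let X be a metric space, p, x, y ∈ X with dist(p, x) = dist(p, y) = t, and let η : ℝ → X be a unit-speed minimizing geodesic from p to x and η' : ℝ → X a unit-speed minimizing geodesic from p to y. Let L, ℓ be real numbers with 0 < ℓ < L, and assume dist(x, y) ≥ 20L. Then there is no u' ∈ [0, t] such that the point s = η'(u') satisfies both dist(s, x) = 4L + ℓ and dist(s, η(u)) ≤ L + ℓ for some u ∈ [0, t]. -/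
/-- If `η`, `η'` are unit-speed minimizing geodesics from `p` to `x` and from `p` to `y`
(with `t = dist p x = dist p y`), `0 < ℓ < L`, and `dist x y ≥ 20L`, then no point
`s = η' u'` with `u' ∈ [0, t]` can satisfy both `dist s x = 4L + ℓ` and
`dist s (η u) ≤ L + ℓ` for some `u ∈ [0, t]`. -/
theorem stmt4 {X : Type*} [MetricSpace X] (p x y : X) (t : ℝ)
    (htx : dist p x = t) (hty : dist p y = t)
    (η η' : ℝ → X)
    (hη0 : η 0 = p) (hηt : η t = x)
    (hηgeo : ∀ s ∈ Set.Icc (0 : ℝ) t, ∀ u ∈ Set.Icc (0 : ℝ) t,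
      dist (η s) (η u) = |s - u|)
    (hη'0 : η' 0 = p) (hη't : η' t = y)
    (hη'geo : ∀ s ∈ Set.Icc (0 : ℝ) t, ∀ u ∈ Set.Icc (0 : ℝ) t,
      dist (η' s) (η' u) = |s - u|)
    (L ℓ : ℝ) (hℓ : 0 < ℓ) (hℓL : ℓ < L)
    (hxy : dist x y ≥ 20 * L) :
    ¬ ∃ u' ∈ Set.Icc (0 : ℝ) t, dist (η' u') x = 4 * L + ℓ ∧
        ∃ u ∈ Set.Icc (0 : ℝ) t, dist (η' u') (η u) ≤ L + ℓ := by
  rintro ⟨u', ⟨h0, ht⟩, hs, -⟩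
  have ht0 : 0 ≤ t := h0.trans ht
  have hp : dist p (η' u') = u' := by
    rw [← hη'0, hη'geo 0 ⟨le_rfl, ht0⟩ u' ⟨h0, ht⟩, zero_sub, abs_neg, abs_of_nonneg h0]
  have hy : dist (η' u') y = t - u' := by
    rw [← hη't, hη'geo u' ⟨h0, ht⟩ t ⟨ht0, le_rfl⟩, abs_sub_comm, abs_of_nonneg (sub_nonneg.2 ht)]
  -- Since `p` is equidistant from `x` and `y`, `dist s y = t - dist p s ≤ dist s x`,
  -- so `dist x y ≤ 2 * dist s x = 8L + 2ℓ < 10L`.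
  have h₁ := dist_triangle p (η' u') x
  have h₂ := dist_triangle_left x y (η' u')
  linarith
end

section
/- Let X be a metric space, p, x, y ∈ X with dist(p, x) = dist(p, y) = t, and let η : ℝ → X be a unit-speed minimizing geodesic from p to x and η' : ℝ → X a unit-speed minimizing geodesic from p to y. Let L, ℓ be real numbers with 0 < ℓ < L, and assume dist(x, y) ≥ 20L. If s ∈ X satisfies dist(s, x) = 4L + ℓ and dist(s, η(u)) ≤ L + ℓ for some u ∈ [0, t], then dist(s, η'(u')) > L for every u' ∈ [0, t]. -/
/-!
Let `q` be a point of the geodesic from `p` to `y` with `dist s q ≤ L`. Comparing distances to `p`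
gives `t = dist p x ≤ dist p q + L + (4L + ℓ)`, and `dist q y = t - dist p q`, so `q` is within
`5L + ℓ` of `y`. Hence `dist x y ≤ (4L + ℓ) + L + (5L + ℓ) < 12L`, contradicting `dist x y ≥ 20L`.
-/

/-- If `η`, `η'` are unit-speed minimizing geodesics from `p` to `x` and from `p` to `y`
(with `t = dist p x = dist p y`), `0 < ℓ < L`, `dist x y ≥ 20L`, and `s` satisfies
`dist s x = 4L + ℓ` and `dist s (η u) ≤ L + ℓ` for some `u ∈ [0, t]`, then
`dist s (η' u') > L` for every `u' ∈ [0, t]`. -/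
theorem stmt5 {X : Type*} [MetricSpace X] (p x y : X) (t : ℝ)
    (htx : dist p x = t) (hty : dist p y = t)
    (η η' : ℝ → X)
    (hη0 : η 0 = p) (hηt : η t = x)
    (hηgeo : ∀ s ∈ Set.Icc (0 : ℝ) t, ∀ u ∈ Set.Icc (0 : ℝ) t,
      dist (η s) (η u) = |s - u|)
    (hη'0 : η' 0 = p) (hη't : η' t = y)
    (hη'geo : ∀ s ∈ Set.Icc (0 : ℝ) t, ∀ u ∈ Set.Icc (0 : ℝ) t,
      dist (η' s) (η' u) = |s - u|)
    (L ℓ : ℝ) (hℓ : 0 < ℓ) (hℓL : ℓ < L)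
    (hxy : dist x y ≥ 20 * L)
    (s : X) (hsx : dist s x = 4 * L + ℓ)
    (hsη : ∃ u ∈ Set.Icc (0 : ℝ) t, dist s (η u) ≤ L + ℓ) :
    ∀ u' ∈ Set.Icc (0 : ℝ) t, dist s (η' u') > L := by
  intro u' hu'
  by_contra! hle
  have ht : (0 : ℝ) ≤ t := hu'.1.trans hu'.2
  have hp : dist p (η' u') = u' := by
    rw [← hη'0, hη'geo 0 ⟨le_rfl, ht⟩ u' hu', zero_sub, abs_neg, abs_of_nonneg hu'.1]
  have hy : dist (η' u') y = t - u' := by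
    rw [← hη't, hη'geo u' hu' t ⟨ht, le_rfl⟩, abs_sub_comm, abs_of_nonneg (sub_nonneg.2 hu'.2)]
  have hpx : dist p x ≤ dist p (η' u') + dist (η' u') s + dist s x := dist_triangle4 _ _ _ _
  have hxy' : dist x y ≤ dist x s + dist s (η' u') + dist (η' u') y := dist_triangle4 _ _ _ _
  rw [dist_comm (η' u') s] at hpx
  rw [dist_comm x s] at hxy'
  linarith
end

section
/- Let K̃, K, Ñ, N be topological spaces with K̃ path-connected and Ñ simply connected. Let j : K̃ → K, i : K → N, and h : K̃ → Ñ be continuous maps and P : Ñ → N a continuous map with P ∘ h = i ∘ j. Assume i is injective, and assume the following condition: for every path δ : [0,1] → K̃ such that j(δ(0)) = j(δ(1)) and the loop i ∘ j ∘ δ in N is null-homotopic, one has δ(0) = δ(1). Then h is injective. -/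
/-!
If `h a = h b`, then `i (j a) = i (j b)`, so `j a = j b`. Join `a` to `b` by a path `δ`. Then
`h ∘ δ` is a loop in the simply connected space `Ntil`, hence null-homotopic, and applying `P`
shows that `i ∘ j ∘ δ = P ∘ h ∘ δ` is null-homotopic. The loop-lifting condition gives `a = b`.
-/

/-- Given continuous maps `j : Ktil → K`, `i : K → N`, `h : Ktil → Ntil`, `P : Ntil → N` with
`P ∘ h = i ∘ j`, `Ktil` path-connected, `Ntil` simply connected, `i` injective, and the
loop-lifting condition (every path `δ` in `Ktil` whose projection `j ∘ δ` is a loop with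
`i ∘ j ∘ δ` null-homotopic in `N` is itself a loop), the map `h` is injective. -/
theorem stmt7 {Ktil K Ntil N : Type*} [TopologicalSpace Ktil] [TopologicalSpace K]
    [TopologicalSpace Ntil] [TopologicalSpace N]
    [PathConnectedSpace Ktil] [SimplyConnectedSpace Ntil]
    (j : Ktil → K) (i : K → N) (h : Ktil → Ntil) (P : Ntil → N)
    (hj : Continuous j) (hi : Continuous i) (hh : Continuous h) (hP : Continuous P)
    (hcomm : ∀ a : Ktil, P (h a) = i (j a))
    (hinj : Function.Injective i)
    (hloop : ∀ (atil btil : Ktil) (δ : Path atil btil) (hab : j atil = j btil),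
      ((δ.map (show Continuous (fun a : Ktil => i (j a)) from hi.comp hj)).cast rfl
          (by rw [hab])).Homotopic (Path.refl (i (j atil))) → atil = btil) :
    Function.Injective h := by
  intro a b hab
  have hjab : j a = j b := hinj (by rw [← hcomm, ← hcomm, hab])
  let δ : Path a b := PathConnectedSpace.somePath a b
  refine hloop a b δ hjab ?_
  -- Stating the goal for a variable `f` in place of `i ∘ j` allows replacing it by `P ∘ h`
  -- although the endpoints of the paths depend on it.
  have key : ∀ (f : Ktil → N) (hf : Continuous f) (hfab : f a = f b),
      f = (fun x => P (h x)) →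
      ((δ.map hf).cast rfl hfab).Homotopic (Path.refl (f a)) := by
    rintro f hf hfab rfl
    -- In the simply connected space `Ntil` the loop `h ∘ δ` is null-homotopic.
    have hq : ((δ.map hh).cast rfl hab).Homotopic (Path.refl (h a)) :=
      SimplyConnectedSpace.paths_homotopic _ _
    exact hq.map ⟨P, hP⟩
  exact key (fun x => i (j x)) (hi.comp hj) (by rw [hjab])
    (funext fun x => (hcomm x).symm)
end
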